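/- arXiv:2408.07764 — 6 statements merged into one kernel-verified Lean document; each statement's English description precedes it below -/
import Mathlib

section
/- If G ∈ F_q^{m×n} is triorthogonal with parameter k, then dim_{F_q} 𝒢 = k + dim_{F_q} 𝒢_0, and consequently dim_{F_q} 𝒢^⊥ = n − k − dim_{F_q} 𝒢_0 (so the associated CSS code encodes exactly k qudits of dimension q). -/
open scoped Classical

noncomputable section

/-- A matrix `G ∈ F^{m×n}` (rows `G a`) is *triorthogonal* with parameter `k`
and weights `σ : Fin n → F`, `τ : Fin k → F` (all nonzero) if
(i) `∑ i, (G a i)^4 (G b i)^2 (G c i)` is `1` when `a = b = c` is among the first `k`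
rows and `0` otherwise, and
(ii) `∑ i, σ i * G a i * G b i` is `τ a` when `a = b` is among the first `k` rows and
`0` otherwise. -/
def IsTriorthogonal {F : Type} [Field F] {m n k : ℕ} (G : Fin m → Fin n → F)
    (σ : Fin n → F) (τ : Fin k → F) : Prop :=
  (∀ i, σ i ≠ 0) ∧ (∀ a, τ a ≠ 0) ∧
  (∀ a b c : Fin m, ∑ i, (G a i) ^ 4 * (G b i) ^ 2 * (G c i) =
      if a = b ∧ b = c ∧ (a : ℕ) < k then 1 else 0) ∧
  (∀ a b : Fin m, ∑ i, σ i * G a i * G b i =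
      if h : a = b ∧ (a : ℕ) < k then τ ⟨(a : ℕ), h.2⟩ else 0)

/-- The dual code `V^⊥ = {x : ∑ i, x i * y i = 0 for all y ∈ V}`. -/
def dualCode {F : Type} [Field F] {n : ℕ} (V : Submodule F (Fin n → F)) :
    Submodule F (Fin n → F) where
  carrier := {x | ∀ y ∈ V, ∑ i, x i * y i = 0}
  add_mem' := by
    intro a b ha hb y hy
    calc ∑ i, (a + b) i * y i = (∑ i, a i * y i) + ∑ i, b i * y i := by
          rw [← Finset.sum_add_distrib]
          exact Finset.sum_congr rfl fun i _ => by simp [add_mul]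
      _ = 0 := by rw [ha y hy, hb y hy]; ring
  zero_mem' := by intro y hy; simp
  smul_mem' := by
    intro c a ha y hy
    calc ∑ i, (c • a) i * y i = c * ∑ i, a i * y i := by
          rw [Finset.mul_sum]
          exact Finset.sum_congr rfl fun i _ => by simp [mul_assoc]
      _ = 0 := by rw [ha y hy]; ring

theorem finrank_dualCode_aux {F : Type} [Field F] {m n : ℕ} (G : Fin m → Fin n → F) :
    Module.finrank F (Submodule.span F (Set.range G)) +
      Module.finrank F (dualCode (Submodule.span F (Set.range G))) = n := by
  have h1 : dualCode (Submodule.span F (Set.range G)) =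
      LinearMap.ker (Matrix.mulVecLin (Matrix.of G)) := by
    ext x
    rw [LinearMap.mem_ker]
    constructor
    · intro hx
      ext a
      have := hx (G a) (Submodule.subset_span ⟨a, rfl⟩)
      simpa [Matrix.mulVec, dotProduct, mul_comm] using this
    · intro hx y hy
      induction hy using Submodule.span_induction with
      | mem y hy =>
        obtain ⟨a, rfl⟩ := hy
        have := congrFun hx a
        simpa [Matrix.mulVec, dotProduct, mul_comm] using this
      | zero => simp
      | add y z _ _ hy hz => simp [mul_add, Finset.sum_add_distrib, hy, hz]
      | smul c y _ hy =>
        have : ∑ i, x i * (c • y) i = c * ∑ i, x i * y i := by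
          rw [Finset.mul_sum]
          exact Finset.sum_congr rfl fun i _ => by simp; ring
        rw [this, hy, mul_zero]
  have h2 := LinearMap.finrank_range_add_finrank_ker (Matrix.mulVecLin (Matrix.of G))
  have h3 := Matrix.rank_eq_finrank_span_row (Matrix.of G)
  rw [Matrix.rank] at h3
  rw [h3, ← h1] at h2
  rw [Module.finrank_fin_fun] at h2
  exact h2

theorem finrank_rowspan_aux {m n k : ℕ} (hkm : k ≤ m)
    {F : Type} [Field F]
    (G : Fin m → Fin n → F) (σ : Fin n → F) (τ : Fin k → F)
    (hG : IsTriorthogonal G σ τ) :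
    Module.finrank F (Submodule.span F (Set.range G)) =
        k + Module.finrank F
          (Submodule.span F (Set.range fun a : Fin (m - k) => G ⟨k + (a : ℕ), by have := a.2; omega⟩)) := by
  obtain ⟨-, hτ, -, hG⟩ := hG
  set V := Submodule.span F (Set.range G) with hV
  set V0 := Submodule.span F (Set.range fun a : Fin (m - k) =>
    G ⟨k + (a : ℕ), by have := a.2; omega⟩) with hV0
  let M : Matrix (Fin k) (Fin n) F := Matrix.of fun a i => σ i * G (Fin.castLE hkm a) i
  let L := Matrix.mulVecLin M
  have hL : ∀ (b : Fin m) (a : Fin k), L (G b) a = if (a : ℕ) = b then τ a else 0 := by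
    intro b a
    have := hG (Fin.castLE hkm a) b
    simp only [L, M, Matrix.mulVecLin_apply, Matrix.mulVec, dotProduct, Matrix.of_apply]
    rw [this]
    by_cases h : (a : ℕ) = b
    · have h' : Fin.castLE hkm a = b := Fin.ext h
      subst h'
      simp
    · have h' : Fin.castLE hkm a ≠ b := fun e => h (by rw [← e]; rfl)
      simp [h, h']
  have h0V : V0 ≤ V := by
    apply Submodule.span_mono
    rintro _ ⟨a, rfl⟩
    exact ⟨_, rfl⟩
  have hker : LinearMap.ker (L.domRestrict V) = V0.comap V.subtype := by
    ext ⟨x, hx⟩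
    simp only [LinearMap.mem_ker, LinearMap.domRestrict_apply, Submodule.mem_comap,
      Submodule.subtype_apply]
    constructor
    · intro h
      obtain ⟨c, rfl⟩ := (Submodule.mem_span_range_iff_exists_fun F).1 hx
      refine Submodule.sum_mem _ fun b _ => ?_
      by_cases hb : (b : ℕ) < k
      · have h2 := congrFun h ⟨b, hb⟩
        have h3 : c b * τ ⟨b, hb⟩ = 0 := by
          rw [← Pi.zero_apply (M := fun _ : Fin k => F) ⟨b, hb⟩, ← h2, map_sum, Finset.sum_apply]
          rw [Finset.sum_eq_single b]
          · simp [hL]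
          · intro d _ hd
            have : (b : ℕ) ≠ d := fun e => hd (Fin.ext e.symm)
            simp [hL, this]
          · simp
        have h4 : c b = 0 := (mul_eq_zero.1 h3).resolve_right (hτ _)
        simp [h4]
      · refine Submodule.smul_mem _ _ (Submodule.subset_span ⟨⟨b - k, by omega⟩, ?_⟩)
        simp only
        congr 1
        apply Fin.ext
        simp only
        omega
    · intro h
      have : V0 ≤ LinearMap.ker L := by
        rw [hV0, Submodule.span_le]
        rintro _ ⟨a, rfl⟩
        refine LinearMap.mem_ker.2 (funext fun d => ?_)
        rw [hL]
        have : (d : ℕ) ≠ k + a := by omega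
        simp [this]
      exact LinearMap.mem_ker.1 (this h)
  have hrange : LinearMap.range (L.domRestrict V) = ⊤ := by
    rw [eq_top_iff]
    rintro y -
    refine ⟨⟨∑ b : Fin k, (y b / τ b) • G (Fin.castLE hkm b), Submodule.sum_mem _ fun b _ =>
      Submodule.smul_mem _ _ (Submodule.subset_span ⟨_, rfl⟩)⟩, ?_⟩
    ext a
    rw [LinearMap.domRestrict_apply, map_sum, Finset.sum_apply, Finset.sum_eq_single a]
    · simp [hL, hτ]
    · intro d _ hd
      have : (a : ℕ) ≠ d := fun e => hd (Fin.ext e.symm)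
      simp [hL, this]
    · simp
  have h := LinearMap.finrank_range_add_finrank_ker (L.domRestrict V)
  rw [hrange, hker, finrank_top, Module.finrank_fin_fun,
    (Submodule.comapSubtypeEquivOfLe h0V).finrank_eq] at h
  exact h.symm

/-- If `G` is triorthogonal with parameter `k`, then `dim 𝒢 = k + dim 𝒢₀` and
`dim 𝒢^⊥ = n − k − dim 𝒢₀`, where `𝒢` is the row span and `𝒢₀` the span of the
last `m−k` rows (so the associated CSS code encodes exactly `k` qudits). -/
theorem finrank_rowspan_and_dual
    {s m n k : ℕ} (hs : 1 ≤ s) (hk : 1 ≤ k) (hkm : k ≤ m)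
    {F : Type} [Field F] [Fintype F] (hF : Fintype.card F = 2 ^ s)
    (G : Fin m → Fin n → F) (σ : Fin n → F) (τ : Fin k → F)
    (hG : IsTriorthogonal G σ τ) :
    Module.finrank F (Submodule.span F (Set.range G)) =
        k + Module.finrank F
          (Submodule.span F (Set.range fun a : Fin (m - k) => G ⟨k + (a : ℕ), by have := a.2; omega⟩)) ∧
    Module.finrank F (dualCode (Submodule.span F (Set.range G))) =
        n - k - Module.finrank F
          (Submodule.span F (Set.range fun a : Fin (m - k) => G ⟨k + (a : ℕ), by have := a.2; omega⟩)) := by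
  have h1 := finrank_rowspan_aux hkm G σ τ hG
  have h2 := finrank_dualCode_aux G
  refine ⟨h1, ?_⟩
  omega
end
end

section
/- If G ∈ F_q^{m×n} is triorthogonal with parameter k and weights σ, τ, then 𝒢_0^⊥ = m_σ(𝒢_1) + 𝒢^⊥, and moreover m_σ(𝒢_1) ∩ 𝒢^⊥ = {0}. -/
open scoped Classical

noncomputable section

/-- Componentwise multiplication `m_w(v)_i = w i * v i` as a linear map. -/
def mulComp {F : Type} [Field F] {n : ℕ} (w : Fin n → F) :
    (Fin n → F) →ₗ[F] (Fin n → F) where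
  toFun v := fun i => w i * v i
  map_add' a b := by funext i; simp [mul_add]
  map_smul' c a := by
    funext i
    simp only [Pi.smul_apply, smul_eq_mul, RingHom.id_apply]
    ring

theorem mem_dualCode_span_range {F : Type} [Field F] {n : ℕ} {ι : Type} (f : ι → Fin n → F)
    (x : Fin n → F) :
    x ∈ dualCode (Submodule.span F (Set.range f)) ↔ ∀ a, ∑ i, x i * f a i = 0 := by
  constructor
  · intro h a
    exact h (f a) (Submodule.subset_span ⟨a, rfl⟩)
  · intro h y hy
    induction hy using Submodule.span_induction with
    | mem y hy => obtain ⟨a, rfl⟩ := hy; exact h a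
    | zero => simp
    | add u v _ _ hu hv => simp [mul_add, Finset.sum_add_distrib, hu, hv]
    | smul c u _ hu =>
      have : ∑ i, x i * (c • u) i = c * ∑ i, x i * u i := by
        rw [Finset.mul_sum]
        exact Finset.sum_congr rfl fun i _ => by simp only [Pi.smul_apply, smul_eq_mul]; ring
      rw [this, hu, mul_zero]

theorem pairing_scaled_first {F : Type} [Field F] {m n k : ℕ} (hkm : k ≤ m)
    (G : Fin m → Fin n → F) (σ : Fin n → F) (τ : Fin k → F)
    (hG : IsTriorthogonal G σ τ) (c : Fin k → F) (b : Fin m) :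
    ∑ i, mulComp σ (∑ a, c a • G (Fin.castLE hkm a)) i * G b i =
      if h : (b : ℕ) < k then c ⟨b, h⟩ * τ ⟨b, h⟩ else 0 := by
  have h1 : ∑ i, mulComp σ (∑ a, c a • G (Fin.castLE hkm a)) i * G b i =
      ∑ a, c a * ∑ i, σ i * G (Fin.castLE hkm a) i * G b i := by
    simp only [mulComp, LinearMap.coe_mk, AddHom.coe_mk, Finset.sum_apply, Pi.smul_apply,
      smul_eq_mul, Finset.mul_sum, Finset.sum_mul]
    rw [Finset.sum_comm]
    exact Finset.sum_congr rfl fun a _ => Finset.sum_congr rfl fun i _ => by ring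
  rw [h1]
  simp only [hG.2.2.2]
  split_ifs with h
  · rw [Finset.sum_eq_single ⟨b, h⟩]
    · have : Fin.castLE hkm ⟨b, h⟩ = b := rfl
      simp [this, h]
    · intro a _ ha
      rw [dif_neg, mul_zero]
      rintro ⟨e, -⟩
      subst e
      exact ha rfl
    · simp
  · refine Finset.sum_eq_zero fun a _ => ?_
    rw [dif_neg, mul_zero]
    rintro ⟨e, -⟩
    exact h (e ▸ a.2)

/-- If `G` is triorthogonal with parameter `k` and weights `σ, τ`, then
`𝒢₀^⊥ = m_σ(𝒢₁) + 𝒢^⊥` and `m_σ(𝒢₁) ∩ 𝒢^⊥ = {0}`. -/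
theorem dual_span_last_eq_scaled_first_sup_dual
    {s m n k : ℕ} (hs : 1 ≤ s) (hk : 1 ≤ k) (hkm : k ≤ m)
    {F : Type} [Field F] [Fintype F] (hF : Fintype.card F = 2 ^ s)
    (G : Fin m → Fin n → F) (σ : Fin n → F) (τ : Fin k → F)
    (hG : IsTriorthogonal G σ τ) :
    dualCode (Submodule.span F (Set.range fun a : Fin (m - k) => G ⟨k + (a : ℕ), by have := a.2; omega⟩)) =
        (Submodule.span F (Set.range fun a : Fin k => G (Fin.castLE hkm a))).map (mulComp σ) ⊔
          dualCode (Submodule.span F (Set.range G)) ∧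
    (Submodule.span F (Set.range fun a : Fin k => G (Fin.castLE hkm a))).map (mulComp σ) ⊓
        dualCode (Submodule.span F (Set.range G)) = ⊥ := by
  have hτ := hG.2.1
  have key := pairing_scaled_first hkm G σ τ hG
  refine ⟨le_antisymm ?_ (sup_le ?_ ?_), ?_⟩
  · intro x hx
    rw [mem_dualCode_span_range] at hx
    set c : Fin k → F := fun a => (∑ i, x i * G (Fin.castLE hkm a) i) / τ a with hc
    refine Submodule.mem_sup.2 ⟨mulComp σ (∑ a, c a • G (Fin.castLE hkm a)),
      Submodule.mem_map_of_mem (Submodule.sum_mem _ fun a _ =>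
        Submodule.smul_mem _ _ (Submodule.subset_span ⟨a, rfl⟩)),
      x - mulComp σ (∑ a, c a • G (Fin.castLE hkm a)), ?_, by abel⟩
    rw [mem_dualCode_span_range]
    intro b
    simp only [Pi.sub_apply, sub_mul, Finset.sum_sub_distrib]
    rw [key c b]
    split_ifs with h
    · rw [hc]
      simp only
      rw [div_mul_cancel₀ _ (hτ _)]
      exact sub_self _
    · have h2 := hx ⟨b - k, by omega⟩
      have h3 : (⟨k + ((b : ℕ) - k), by omega⟩ : Fin m) = b := Fin.ext (by simp only; omega)
      simp only [h3] at h2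
      rw [h2, sub_zero]
  · rintro _ ⟨y, hy, rfl⟩
    obtain ⟨c, rfl⟩ := (Submodule.mem_span_range_iff_exists_fun F).1 hy
    rw [mem_dualCode_span_range]
    intro a
    rw [key c]
    simp
  · intro x hx
    rw [mem_dualCode_span_range] at hx ⊢
    exact fun a => hx _
  · rw [eq_bot_iff]
    rintro _ ⟨⟨y, hy, rfl⟩, hx⟩
    obtain ⟨c, rfl⟩ := (Submodule.mem_span_range_iff_exists_fun F).1 hy
    have hx' := (mem_dualCode_span_range _ _).1 hx
    have hc : ∀ a, c a = 0 := by
      intro a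
      have h := hx' (Fin.castLE hkm a)
      rw [key c] at h
      simpa [hτ] using h
    simp [hc]
end
end

section
/- If G ∈ F_q^{m×n} is triorthogonal with parameter k and weights σ, τ, then for every f ∈ 𝒢 with f ∉ 𝒢_0, the vector m_σ(f) lies in 𝒢_0^⊥ but not in 𝒢^⊥ and has the same Hamming weight as f; consequently, whenever 𝒢 \ 𝒢_0 is nonempty, min{|f| : f ∈ 𝒢 \ 𝒢_0} ≥ min{|h| : h ∈ 𝒢_0^⊥ \ 𝒢^⊥} (i.e. the X-distance of the associated CSS code is at least its Z-distance). -/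
open scoped Classical

noncomputable section

/-- For `G` triorthogonal with parameter `k` and weights `σ, τ`: every `f ∈ 𝒢 \\ 𝒢₀`
has `m_σ(f) ∈ 𝒢₀^⊥ \\ 𝒢^⊥` with the same Hamming weight; consequently, if `𝒢 \\ 𝒢₀`
is nonempty, the X-distance is at least the Z-distance of the associated CSS code. -/
theorem X_distance_ge_Z_distance
    {s m n k : ℕ} (hs : 1 ≤ s) (hk : 1 ≤ k) (hkm : k ≤ m)
    {F : Type} [Field F] [Fintype F] (hF : Fintype.card F = 2 ^ s)
    (G : Fin m → Fin n → F) (σ : Fin n → F) (τ : Fin k → F)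
    (hG : IsTriorthogonal G σ τ) :
    (∀ f : Fin n → F, f ∈ Submodule.span F (Set.range G) →
      f ∉ Submodule.span F (Set.range fun a : Fin (m - k) => G ⟨k + (a : ℕ), by have := a.2; omega⟩) →
      mulComp σ f ∈
          dualCode (Submodule.span F (Set.range fun a : Fin (m - k) => G ⟨k + (a : ℕ), by have := a.2; omega⟩)) ∧
        mulComp σ f ∉ dualCode (Submodule.span F (Set.range G)) ∧
        hammingNorm (mulComp σ f) = hammingNorm f) ∧
    ((∃ f : Fin n → F, f ∈ Submodule.span F (Set.range G) ∧
        f ∉ Submodule.span F (Set.range fun a : Fin (m - k) => G ⟨k + (a : ℕ), by have := a.2; omega⟩)) →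
      sInf {w : ℕ | ∃ h : Fin n → F,
          h ∈ dualCode (Submodule.span F (Set.range fun a : Fin (m - k) => G ⟨k + (a : ℕ), by have := a.2; omega⟩)) ∧
          h ∉ dualCode (Submodule.span F (Set.range G)) ∧ hammingNorm h = w} ≤
        sInf {w : ℕ | ∃ f : Fin n → F, f ∈ Submodule.span F (Set.range G) ∧
          f ∉ Submodule.span F (Set.range fun a : Fin (m - k) => G ⟨k + (a : ℕ), by have := a.2; omega⟩) ∧
          hammingNorm f = w}) := by
  obtain ⟨hσ, hτ, -, h2⟩ := hG
  have key : ∀ f : Fin n → F, f ∈ Submodule.span F (Set.range G) →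
      f ∉ Submodule.span F (Set.range fun a : Fin (m - k) => G ⟨k + (a : ℕ), by have := a.2; omega⟩) →
      mulComp σ f ∈
          dualCode (Submodule.span F (Set.range fun a : Fin (m - k) => G ⟨k + (a : ℕ), by have := a.2; omega⟩)) ∧
        mulComp σ f ∉ dualCode (Submodule.span F (Set.range G)) ∧
        hammingNorm (mulComp σ f) = hammingNorm f := by
    intro f hf hf0
    obtain ⟨c, rfl⟩ := (Submodule.mem_span_range_iff_exists_fun F).1 hf
    have pair : ∀ b : Fin m, ∑ i, mulComp σ (∑ a, c a • G a) i * G b i =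
        if h : (b : ℕ) < k then c b * τ ⟨(b : ℕ), h⟩ else 0 := by
      intro b
      have e1 : ∑ i, mulComp σ (∑ a, c a • G a) i * G b i =
          ∑ a, c a * ∑ i, σ i * G a i * G b i := by
        simp only [mulComp, LinearMap.coe_mk, AddHom.coe_mk, Finset.sum_apply, Pi.smul_apply,
          smul_eq_mul, Finset.mul_sum, Finset.sum_mul]
        rw [Finset.sum_comm]
        refine Finset.sum_congr rfl fun a _ => Finset.sum_congr rfl fun i _ => ?_
        ring
      rw [e1, Finset.sum_eq_single b]
      · rw [h2]
        by_cases hb : (b : ℕ) < k <;> simp [hb]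
      · intro a _ hab
        rw [h2]
        simp [hab]
      · simp
    refine ⟨?_, ?_, ?_⟩
    · intro y hy
      obtain ⟨d, rfl⟩ := (Submodule.mem_span_range_iff_exists_fun F).1 hy
      simp only [Finset.sum_apply, Pi.smul_apply, smul_eq_mul, Finset.mul_sum]
      rw [Finset.sum_comm]
      refine Finset.sum_eq_zero fun a _ => ?_
      have := pair ⟨k + (a : ℕ), by have := a.2; omega⟩
      rw [dif_neg (by simp)] at this
      simp only [mul_left_comm _ (d a), ← Finset.mul_sum]
      rw [this, mul_zero]
    · intro hd
      apply hf0
      refine Submodule.sum_mem _ fun a _ => ?_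
      by_cases ha : (a : ℕ) < k
      · have h0 := hd (G a) (Submodule.subset_span ⟨a, rfl⟩)
        rw [pair, dif_pos ha] at h0
        rcases mul_eq_zero.1 h0 with h | h
        · rw [h, zero_smul]; exact Submodule.zero_mem _
        · exact absurd h (hτ _)
      · refine Submodule.smul_mem _ _ (Submodule.subset_span ?_)
        refine ⟨⟨(a : ℕ) - k, by have := a.2; omega⟩, ?_⟩
        refine congrArg G (Fin.ext ?_)
        simp only
        omega
    · generalize (∑ a, c a • G a) = f
      simp only [hammingNorm]
      congr 1
      ext i
      simp [mulComp, hσ i]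
  refine ⟨key, ?_⟩
  rintro ⟨f, hf, hf0⟩
  refine le_csInf ⟨_, f, hf, hf0, rfl⟩ ?_
  rintro w ⟨g, hg, hg0, rfl⟩
  obtain ⟨h1, h3, h4⟩ := key g hg hg0
  exact Nat.sInf_le ⟨_, h1, h3, h4⟩
end
end

section
/- If G ∈ F_q^{m×n} is triorthogonal with parameter k, then for every u ∈ F_q^m, setting f := Σ_{a=1}^m u_a g^a ∈ F_q^n (an arbitrary element of the row span 𝒢), one has Σ_{i=1}^n f_i^7 = Σ_{a=1}^k u_a^7, with all arithmetic in F_q. -/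
open scoped Classical

noncomputable section

/-- For `G` triorthogonal with parameter `k`: any element `f = Σ_a u_a g^a` of the
row span satisfies `Σ_i f_i^7 = Σ_{a=1}^k u_a^7`. -/
theorem sum_seventh_powers_of_rowspan
    {s m n k : ℕ} (hs : 1 ≤ s) (hk : 1 ≤ k) (hkm : k ≤ m)
    {F : Type} [Field F] [Fintype F] (hF : Fintype.card F = 2 ^ s)
    (G : Fin m → Fin n → F) (σ : Fin n → F) (τ : Fin k → F)
    (hG : IsTriorthogonal G σ τ) (u : Fin m → F) :
    ∑ i, (∑ a, u a * G a i) ^ 7 = ∑ a : Fin k, u (Fin.castLE hkm a) ^ 7 := by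
  obtain ⟨-, -, h3, -⟩ := hG
  have h2 : CharP F 2 := by
    obtain ⟨p, hp⟩ := CharP.exists F
    obtain ⟨e, hpp, he⟩ := FiniteField.card F p
    have hdvd : p ∣ 2 ^ s := by
      rw [← hF, he]
      exact dvd_pow_self p e.pos.ne'
    have hp2 : p = 2 := (Nat.prime_dvd_prime_iff_eq hpp Nat.prime_two).1 (hpp.dvd_of_dvd_pow hdvd)
    rwa [hp2] at hp
  have hpow2 : ∀ f : Fin m → F, (∑ a, f a) ^ 2 = ∑ a, f a ^ 2 := fun f =>
    sum_pow_char 2 Finset.univ f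
  have hpow4 : ∀ f : Fin m → F, (∑ a, f a) ^ 4 = ∑ a, f a ^ 4 := by
    intro f
    rw [show (4 : ℕ) = 2 * 2 from rfl, pow_mul, hpow2, hpow2]
    exact Finset.sum_congr rfl fun a _ => (pow_mul _ _ _).symm
  have key : ∀ i, (∑ a, u a * G a i) ^ 7 = ∑ a, ∑ b, ∑ c,
      (u a ^ 4 * u b ^ 2 * u c) * (G a i ^ 4 * G b i ^ 2 * G c i) := by
    intro i
    rw [show (∑ a, u a * G a i) ^ 7 = (∑ a, u a * G a i) ^ 4 *
      ((∑ a, u a * G a i) ^ 2 * (∑ a, u a * G a i)) by ring, hpow4, hpow2,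
      Finset.sum_mul_sum, Finset.sum_mul]
    refine Finset.sum_congr rfl fun a _ => ?_
    rw [Finset.mul_sum]
    refine Finset.sum_congr rfl fun b _ => ?_
    rw [Finset.mul_sum]
    exact Finset.sum_congr rfl fun c _ => by ring
  have step : ∑ i, (∑ a, u a * G a i) ^ 7 = ∑ a, ∑ b, ∑ c,
      (u a ^ 4 * u b ^ 2 * u c) * (if a = b ∧ b = c ∧ (a : ℕ) < k then 1 else 0) := by
    simp_rw [key]
    rw [Finset.sum_comm]
    refine Finset.sum_congr rfl fun a _ => ?_
    rw [Finset.sum_comm]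
    refine Finset.sum_congr rfl fun b _ => ?_
    rw [Finset.sum_comm]
    refine Finset.sum_congr rfl fun c _ => ?_
    rw [← Finset.mul_sum, h3]
  have step2 : ∀ a : Fin m, ∑ b, ∑ c,
      (u a ^ 4 * u b ^ 2 * u c) * (if a = b ∧ b = c ∧ (a : ℕ) < k then 1 else 0)
      = if (a : ℕ) < k then u a ^ 7 else 0 := by
    intro a
    rw [Finset.sum_eq_single a, Finset.sum_eq_single a]
    · by_cases h : (a : ℕ) < k
      · simp only [h, and_self, if_true]
        ring
      · simp [h]
    · intro c _ hc
      simp [Ne.symm hc]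
    · simp
    · intro b _ hb
      simp [Ne.symm hb]
    · simp
  rw [step, Finset.sum_congr rfl fun a _ => step2 a, ← Finset.sum_filter]
  symm
  refine Finset.sum_bij (fun a _ => Fin.castLE hkm a) ?_ ?_ ?_ ?_
  · intro a _
    simp
  · intro a _ b _ h
    exact Fin.castLE_injective hkm h
  · intro b hb
    exact ⟨⟨b, (Finset.mem_filter.1 hb).2⟩, Finset.mem_univ _, rfl⟩
  · intro a _
    rfl
end
end

section
/- Let G ∈ F_q^{m×n} be triorthogonal with parameter k. For u ∈ F_q^k define the (unnormalised) encoded computational basis state v_u : (Fin n → F_q) → ℂ by v_u(x) = 1 if x − Σ_{a=1}^k u_a g^a ∈ 𝒢_0 and v_u(x) = 0 otherwise, and let D be the diagonal operator on functions ψ : (Fin n → F_q) → ℂ given by (Dψ)(x) = ε(tr(Σ_{i=1}^n x_i^7)) · ψ(x). Then for every u ∈ F_q^k, D v_u = ε(tr(Σ_{a=1}^k u_a^7)) · v_u; i.e. the transversal gate U_1^{(7)}⊗…⊗U_1^{(7)} acts on encoded basis states exactly as the encoded transversal gate. -/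
open scoped Classical

noncomputable section

/-- The trace map `tr : F_{2^s} → F_2 ⊆ F_{2^s}`, `tr γ = Σ_{i=0}^{s-1} γ^{2^i}`
(its values lie in the prime field `{0, 1}`). -/
def trF {F : Type} [Field F] (s : ℕ) (x : F) : F := ∑ i ∈ Finset.range s, x ^ 2 ^ i

/-- `ε ∘ tr : F_{2^s} → ℂ`, where `ε 0 = 1` and `ε 1 = -1` on the prime field `F_2`. -/
def epsTr {F : Type} [Field F] (s : ℕ) (x : F) : ℂ := if trF s x = 0 then 1 else -1

theorem key_seventh {F : Type} [Field F] [CharP F 2] {ι : Type} [Fintype ι] {n : ℕ}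
    (G : ι → Fin n → F) (P : ι → Prop)
    (hG : ∀ a b c : ι, ∑ i, (G a i) ^ 4 * (G b i) ^ 2 * (G c i) =
      if a = b ∧ b = c ∧ P a then 1 else 0) (w : ι → F) :
    ∑ i, (∑ a, w a * G a i) ^ 7 = ∑ a, if P a then w a ^ 7 else 0 := by
  have h2 : ∀ f : ι → F, (∑ a, f a) ^ 2 = ∑ a, f a ^ 2 := fun f => sum_pow_char 2 _ f
  have h4 : ∀ f : ι → F, (∑ a, f a) ^ 4 = ∑ a, f a ^ 4 := by
    intro f
    have : (∑ a, f a) ^ 4 = ((∑ a, f a) ^ 2) ^ 2 := by ring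
    rw [this, h2, h2]
    exact Finset.sum_congr rfl fun a _ => by ring
  have step : ∀ i, (∑ a, w a * G a i) ^ 7 =
      ∑ a, ∑ b, ∑ c, w a ^ 4 * w b ^ 2 * w c * ((G a i) ^ 4 * (G b i) ^ 2 * (G c i)) := by
    intro i
    have : (∑ a, w a * G a i) ^ 7 =
      (∑ a, w a * G a i) ^ 4 * ((∑ a, w a * G a i) ^ 2 * (∑ a, w a * G a i)) := by ring
    rw [this, h2, h4, Finset.sum_mul_sum, Finset.sum_mul_sum]
    refine Finset.sum_congr rfl fun a _ => ?_
    refine Finset.sum_congr rfl fun b _ => ?_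
    rw [Finset.mul_sum]
    exact Finset.sum_congr rfl fun c _ => by ring
  simp_rw [step]
  rw [Finset.sum_comm]
  refine Finset.sum_congr rfl fun a _ => ?_
  rw [Finset.sum_comm]
  have inner : ∀ b, ∑ i, ∑ c, w a ^ 4 * w b ^ 2 * w c * ((G a i) ^ 4 * (G b i) ^ 2 * (G c i)) =
      ∑ c, w a ^ 4 * w b ^ 2 * w c * (if a = b ∧ b = c ∧ P a then 1 else 0) := by
    intro b
    rw [Finset.sum_comm]
    refine Finset.sum_congr rfl fun c _ => ?_
    rw [← Finset.mul_sum, hG]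
  simp_rw [inner]
  rw [Finset.sum_eq_single a, Finset.sum_eq_single a]
  · by_cases h : P a
    · simp [h]; ring
    · simp [h]
  · intro c _ hc
    simp [Ne.symm hc]
  · simp
  · intro b _ hb
    simp [Ne.symm hb]
  · simp

/-- For `G` triorthogonal with parameter `k`: the diagonal operator
`(Dψ)(x) = ε(tr(Σ_i x_i^7)) ψ(x)` acts on the unnormalised encoded basis state
`v_u(x) = [x − Σ_a u_a g^a ∈ 𝒢₀]` as multiplication by `ε(tr(Σ_{a<k} u_a^7))`;
i.e. the transversal gate `U_1^{(7)} ⊗ ⋯ ⊗ U_1^{(7)}` acts on encoded basis states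
exactly as the encoded transversal gate. -/
theorem transversal_gate_acts_on_encoded_basis
    {s m n k : ℕ} (hs : 1 ≤ s) (hk : 1 ≤ k) (hkm : k ≤ m)
    {F : Type} [Field F] [Fintype F] (hF : Fintype.card F = 2 ^ s)
    (G : Fin m → Fin n → F) (σ : Fin n → F) (τ : Fin k → F)
    (hG : IsTriorthogonal G σ τ) (u : Fin k → F) :
    (fun x : Fin n → F => epsTr s (∑ i, x i ^ 7) *
        (if (x - fun i => ∑ a, u a * G (Fin.castLE hkm a) i) ∈
            Submodule.span F (Set.range fun a : Fin (m - k) => G ⟨k + (a : ℕ), by have := a.2; omega⟩)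
          then (1 : ℂ) else 0)) =
    (fun x : Fin n → F => epsTr s (∑ a, u a ^ 7) *
        (if (x - fun i => ∑ a, u a * G (Fin.castLE hkm a) i) ∈
            Submodule.span F (Set.range fun a : Fin (m - k) => G ⟨k + (a : ℕ), by have := a.2; omega⟩)
          then (1 : ℂ) else 0)) := by
  have : Fact (Nat.Prime 2) := ⟨Nat.prime_two⟩
  have : CharP F 2 := charP_of_card_eq_prime_pow (f := s) (by simpa using hF)
  funext x
  split_ifs with hx
  swap
  · simp
  congr 2
  obtain ⟨c, hc⟩ := (Submodule.mem_span_range_iff_exists_fun F).1 hx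
  let e : Fin k ⊕ Fin (m - k) ≃ Fin m := finSumFinEquiv.trans (finCongr (by omega))
  have el : ∀ a, e (Sum.inl a) = Fin.castLE hkm a := fun a => by ext; simp [e]
  have er : ∀ a : Fin (m - k), e (Sum.inr a) = ⟨k + (a : ℕ), by have := a.2; omega⟩ :=
    fun a => by ext; simp [e]
  have key := key_seventh (fun p => G (e p)) (fun p => (e p : ℕ) < k)
    (fun p q r => by
      have := hG.2.2.1 (e p) (e q) (e r)
      simp only [e.injective.eq_iff] at this
      convert this) (Sum.elim u c)
  have hxi : ∀ i, x i = ∑ p, Sum.elim u c p * G (e p) i := by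
    intro i
    have h := congrFun hc i
    simp only [Finset.sum_apply, Pi.smul_apply, smul_eq_mul, Pi.sub_apply] at h
    simp only [Fintype.sum_sum_type, Sum.elim_inl, Sum.elim_inr, el, er]
    rw [h]; ring
  simp_rw [hxi, key]
  simp [Fintype.sum_sum_type, el, er]
end
end

section
/- For every complex matrix ρ indexed by F_2^3 (an arbitrary three-qubit operator), the twirling identity (1/8) Σ_{d∈F_2^3} S^{(d)} · ρ · S^{(d)} = Σ_{b∈F_2^3} ⟨M_b, ρ M_b⟩ |M_b⟩⟨M_b| holds, where ⟨·,·⟩ is the standard Hermitian inner product on ℂ^{F_2^3} and |M_b⟩⟨M_b| denotes the outer product. Consequently, if ρ is positive semidefinite with trace 1 and ⟨CCZ, ρ CCZ⟩ ≥ 1 − p, then the coefficients p_b := ⟨M_b, ρ M_b⟩ are nonnegative real, sum to 1, and satisfy Σ_{b ≠ 0} p_b ≤ p. -/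
noncomputable section

/-- `(−1)^x` for `x ∈ F_2`. -/
def sgn2 (x : ZMod 2) : ℂ := if x = 0 then 1 else -1

/-- The `CCZ` gate: diagonal with entry `(−1)^{b₁b₂b₃}` at `b ∈ F_2^3`. -/
def CCZm : Matrix (Fin 3 → ZMod 2) (Fin 3 → ZMod 2) ℂ :=
  Matrix.diagonal fun b => sgn2 (b 0 * b 1 * b 2)

/-- The three-qubit Pauli `X^d`: `(X^d)_{b,b'} = 1` if `b = b' + d`, else `0`. -/
def Xm3 (d : Fin 3 → ZMod 2) : Matrix (Fin 3 → ZMod 2) (Fin 3 → ZMod 2) ℂ :=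
  Matrix.of fun b b' => if b = b' + d then 1 else 0

/-- The three-qubit Pauli `Z^d`: diagonal with entry `(−1)^{Σ_i d_i b_i}` at `b`. -/
def Zm3 (d : Fin 3 → ZMod 2) : Matrix (Fin 3 → ZMod 2) (Fin 3 → ZMod 2) ℂ :=
  Matrix.diagonal fun b => sgn2 (∑ i, d i * b i)

/-- The stabilisers `S^{(d)} = CCZ · X^d · CCZ` of the `CCZ` magic state. -/
def Sm (d : Fin 3 → ZMod 2) : Matrix (Fin 3 → ZMod 2) (Fin 3 → ZMod 2) ℂ :=
  CCZm * Xm3 d * CCZm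

/-- The `CCZ` magic state `|CCZ⟩`, with entry `8^{-1/2} (−1)^{b₁b₂b₃}` at `b`. -/
def cczVec : (Fin 3 → ZMod 2) → ℂ :=
  fun b => ((Real.sqrt 8 : ℝ) : ℂ)⁻¹ * sgn2 (b 0 * b 1 * b 2)

/-- `|M_b⟩ := Z^b |CCZ⟩`, an orthonormal basis of the three-qubit space. -/
def Mvec (b : Fin 3 → ZMod 2) : (Fin 3 → ZMod 2) → ℂ :=
  (Zm3 b).mulVec cczVec

/-- The standard Hermitian inner product `⟨u, v⟩ = Σ_x conj (u x) * v x`. -/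
def innerC (u v : (Fin 3 → ZMod 2) → ℂ) : ℂ :=
  ∑ x, (starRingEnd ℂ) (u x) * v x

/-- The outer product `|M_b⟩⟨M_b|`. -/
def outerM (b : Fin 3 → ZMod 2) : Matrix (Fin 3 → ZMod 2) (Fin 3 → ZMod 2) ℂ :=
  Matrix.of fun x y => Mvec b x * (starRingEnd ℂ) (Mvec b y)

/-! ### Helper lemmas -/

lemma sgn2_add (x y : ZMod 2) : sgn2 (x + y) = sgn2 x * sgn2 y := by
  have h : ∀ x y : ZMod 2, x + y = 0 ↔ (x = 0 ↔ y = 0) := by decide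
  by_cases hx : x = 0 <;> by_cases hy : y = 0 <;> simp [sgn2, h, hx, hy]

lemma sgn2_conj (x : ZMod 2) : (starRingEnd ℂ) (sgn2 x) = sgn2 x := by
  unfold sgn2; split_ifs <;> simp

lemma sgn2_sq (x : ZMod 2) : sgn2 x * sgn2 x = 1 := by
  unfold sgn2; split_ifs <;> simp

lemma add_self3 (x : Fin 3 → ZMod 2) : x + x = 0 := by
  funext i; exact CharTwo.add_self_eq_zero (x i)

/-- The character `(−1)^{b·x}`. -/
def chi (b x : Fin 3 → ZMod 2) : ℂ := sgn2 (∑ i, b i * x i)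

/-- The phase `(−1)^{x₁x₂x₃}`. -/
def cph (x : Fin 3 → ZMod 2) : ℂ := sgn2 (x 0 * x 1 * x 2)

lemma chi_add (b x y : Fin 3 → ZMod 2) : chi b (x + y) = chi b x * chi b y := by
  unfold chi
  rw [← sgn2_add, ← Finset.sum_add_distrib]
  simp [mul_add]

lemma sum_chi_int : ∀ z : Fin 3 → ZMod 2,
    (∑ b : Fin 3 → ZMod 2, (if (∑ i, b i * z i) = 0 then (1 : ℤ) else -1)) =
      if z = 0 then 8 else 0 := by
  decide +kernel

lemma sum_chi (z : Fin 3 → ZMod 2) : ∑ b, chi b z = if z = 0 then 8 else 0 := by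
  have h := congrArg (fun n : ℤ => (n : ℂ)) (sum_chi_int z)
  simp only [Int.cast_sum] at h
  push_cast at h
  simpa [chi, sgn2] using h

/-- The normalisation `8^{-1/2}`. -/
def rn : ℂ := ((Real.sqrt 8 : ℝ) : ℂ)⁻¹

lemma rn_sq : rn * rn = 1 / 8 := by
  unfold rn
  rw [← mul_inv, ← Complex.ofReal_mul, Real.mul_self_sqrt (by norm_num)]
  norm_num

lemma rn_conj : (starRingEnd ℂ) rn = rn := by
  unfold rn; rw [map_inv₀, Complex.conj_ofReal]

lemma Mvec_apply (b x : Fin 3 → ZMod 2) : Mvec b x = rn * cph x * chi b x := by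
  simp only [Mvec, Zm3, Matrix.mulVec_diagonal, cczVec, rn, cph, chi]; ring

lemma Mvec_conj (b x : Fin 3 → ZMod 2) : (starRingEnd ℂ) (Mvec b x) = Mvec b x := by
  rw [Mvec_apply]; simp only [map_mul, rn_conj, cph, chi, sgn2_conj]

lemma Mvec_zero : Mvec 0 = cczVec := by
  funext x; simp [Mvec, Zm3, sgn2]

lemma Sm_apply (d x y : Fin 3 → ZMod 2) :
    Sm d x y = if x = y + d then cph x * cph y else 0 := by
  simp only [Sm, CCZm, Xm3, Matrix.mul_diagonal, Matrix.diagonal_mul, Matrix.of_apply, cph]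
  split_ifs <;> simp

lemma eq_add_iff3 (x y d : Fin 3 → ZMod 2) : x = y + d ↔ y = x + d := by
  constructor <;> rintro rfl <;> rw [add_assoc, add_self3, add_zero]

lemma conj_apply (ρ : Matrix (Fin 3 → ZMod 2) (Fin 3 → ZMod 2) ℂ) (d x y : Fin 3 → ZMod 2) :
    (Sm d * ρ * Sm d) x y =
      cph x * cph (x + d) * ρ (x + d) (y + d) * (cph (y + d) * cph y) := by
  simp only [Matrix.mul_apply, Sm_apply, eq_add_iff3 x, ite_mul, zero_mul, mul_ite, mul_zero,
    Finset.sum_ite_eq', Finset.mem_univ, if_true]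

lemma inner_apply (ρ : Matrix (Fin 3 → ZMod 2) (Fin 3 → ZMod 2) ℂ) (b : Fin 3 → ZMod 2) :
    innerC (Mvec b) (ρ.mulVec (Mvec b)) =
      ∑ u, ∑ v, (1 / 8 : ℂ) * (cph u * ρ u v * cph v) * chi b (u + v) := by
  simp only [innerC, Mvec_conj, Matrix.mulVec, dotProduct, Finset.mul_sum]
  refine Finset.sum_congr rfl fun u _ => Finset.sum_congr rfl fun v _ => ?_
  rw [Mvec_apply, Mvec_apply, chi_add, ← rn_sq]; ring

lemma sum_inner_chi (ρ : Matrix (Fin 3 → ZMod 2) (Fin 3 → ZMod 2) ℂ) (z : Fin 3 → ZMod 2) :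
    ∑ b, innerC (Mvec b) (ρ.mulVec (Mvec b)) * chi b z =
      ∑ u, cph u * ρ u (u + z) * cph (u + z) := by
  simp only [inner_apply, Finset.sum_mul]
  rw [Finset.sum_comm]
  refine Finset.sum_congr rfl fun u _ => ?_
  rw [Finset.sum_comm]
  simp only [mul_assoc, ← chi_add]
  simp only [← Finset.mul_sum, sum_chi]
  have hz : ∀ v, (u + v + z = 0) ↔ v = u + z := by
    intro v
    constructor
    · intro h
      calc v = (u + u) + v + (z + z) := by rw [add_self3, add_self3]; simp
        _ = (u + v + z) + (u + z) := by abel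
        _ = u + z := by rw [h, zero_add]
    · rintro rfl
      calc u + (u + z) + z = (u + u) + (z + z) := by abel
        _ = 0 := by rw [add_self3, add_self3, add_zero]
  simp only [hz, mul_ite, mul_zero, Finset.sum_ite_eq', Finset.mem_univ, if_true]
  ring

lemma cph_sq (x : Fin 3 → ZMod 2) : cph x * cph x = 1 := sgn2_sq _

open scoped ComplexOrder in
/-- Twirling identity for the `CCZ` magic state: for every three-qubit operator `ρ`,
`(1/8) Σ_d S^{(d)} ρ S^{(d)} = Σ_b ⟨M_b, ρ M_b⟩ |M_b⟩⟨M_b|`. Consequently, if `ρ` is a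
state (positive semidefinite, trace one) with `⟨CCZ, ρ CCZ⟩ ≥ 1 − p`, then the
coefficients `p_b = ⟨M_b, ρ M_b⟩` are nonnegative reals summing to `1` with
`Σ_{b ≠ 0} p_b ≤ p`. -/
theorem ccz_twirling
    (ρ : Matrix (Fin 3 → ZMod 2) (Fin 3 → ZMod 2) ℂ) :
    ((1 : ℂ) / 8) • (∑ d, Sm d * ρ * Sm d) =
      ∑ b, innerC (Mvec b) (ρ.mulVec (Mvec b)) • outerM b ∧
    ∀ p : ℝ, ρ.PosSemidef → ρ.trace = 1 →
      ((1 - p : ℝ) : ℂ) ≤ innerC cczVec (ρ.mulVec cczVec) →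
      (∀ b, 0 ≤ innerC (Mvec b) (ρ.mulVec (Mvec b))) ∧
      (∑ b, innerC (Mvec b) (ρ.mulVec (Mvec b))) = 1 ∧
      (∑ b ∈ Finset.univ.filter fun b => b ≠ 0, innerC (Mvec b) (ρ.mulVec (Mvec b))) ≤
        ((p : ℝ) : ℂ) := by
  have hsum : ∑ b, innerC (Mvec b) (ρ.mulVec (Mvec b)) = ρ.trace := by
    have h := sum_inner_chi ρ 0
    have h0 : ∀ b, chi b 0 = 1 := by intro b; simp [chi, sgn2]
    simp only [h0, mul_one, add_zero] at h
    rw [h, Matrix.trace]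
    refine Finset.sum_congr rfl fun u _ => ?_
    rw [mul_right_comm, cph_sq, one_mul, Matrix.diag_apply]
  refine ⟨?_, ?_⟩
  · ext x y
    simp only [Matrix.smul_apply, Matrix.sum_apply, conj_apply, smul_eq_mul, outerM,
      Matrix.of_apply, Mvec_conj]
    have h1 : ∀ b, innerC (Mvec b) (ρ.mulVec (Mvec b)) * (Mvec b x * Mvec b y) =
        (1 / 8 : ℂ) * (cph x * cph y) *
          (innerC (Mvec b) (ρ.mulVec (Mvec b)) * chi b (x + y)) := by
      intro b
      rw [Mvec_apply b x, Mvec_apply b y, chi_add, ← rn_sq]; ring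
    simp only [h1]
    rw [← Finset.mul_sum, sum_inner_chi, mul_assoc (1 / 8 : ℂ)]
    congr 1
    symm
    rw [Finset.mul_sum, ← Equiv.sum_comp (Equiv.addLeft x)]
    refine Finset.sum_congr rfl fun d _ => ?_
    have e : x + d + (x + y) = y + d := by
      calc x + d + (x + y) = (x + x) + (y + d) := by abel
        _ = y + d := by rw [add_self3, zero_add]
    simp only [Equiv.coe_addLeft, e]
    ring
  · intro p hρ htr hp
    have hs1 := hsum.trans htr
    refine ⟨?_, hs1, ?_⟩
    · intro b
      exact hρ.dotProduct_mulVec_nonneg (Mvec b)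
    · rw [← Finset.add_sum_erase Finset.univ _ (Finset.mem_univ 0), Mvec_zero] at hs1
      rw [Finset.filter_ne' Finset.univ (0 : Fin 3 → ZMod 2), eq_sub_of_add_eq' hs1]
      have h2 : ((p : ℝ) : ℂ) = 1 - ((1 - p : ℝ) : ℂ) := by push_cast; ring
      rw [h2]
      exact sub_le_sub_left hp 1
end
end
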